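/- Theorem 3, second part: if π/3 < θ < π/2, then the length of the minimum construction tree is strictly greater than the length of the full Steiner tree: 2·dist(A₁',F₁₂) + 2·dist(A₃,F₃₄) + 2·sin(θ/2)·dist(F₁₂,F₃₄) > 2·dist(A₁',O₁₂) + 2·dist(A₃,O₃₄) + dist(O₁₂,O₃₄); equivalently, 2·(a12 + a34)·cos(θ/2) > (a12 + a34)·(√3/2 + cos(θ/2)/(2·sin(θ/2))). -/

import Mathlib

/-!
Both trees are the same figure, with base angle `α = θ / 2` respectively `α = π / 6`: two isosceles
triangles of base angle `α` stand on the parallel sides, and their apexes are joined by an edge of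
weight `2 sin α` (which is `1` for `α = π / 6`). Its length increases strictly with `α`. Indeed, if
`S` is the sum of the parallel sides, the length is `S sec α + 2 sin α |d - (S / 2) tan α|`; when
`α` increases to `β`, the absolute value drops by at most `(S / 2) (tan β - tan α)`, and this loss,
weighted by `2 sin α`, is less than the gain `S (sec β - sec α)`, because `sec` is a strictly convex
function of `tan` with slope `sin`.

While the apexes have not crossed, the length is `S cos α + 2 d sin α`. For `2 d tan (θ / 2) = S`
this is `S sin (θ / 2 + α) / sin (θ / 2)`, so that the second inequality amounts to
`sin (θ / 2 + π / 6) < sin θ`. This holds from `θ = π / 3`, where the two angles coincide, up to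
`θ = 5 π / 9`, where they are supplementary.
-/

open Real EuclideanGeometry

noncomputable def pt (x y : ℝ) : EuclideanSpace ℝ (Fin 2) :=
  (WithLp.equiv 2 (Fin 2 → ℝ)).symm ![x, y]

theorem dist_pt (x y z w : ℝ) : dist (pt x y) (pt z w) = √((x - z) ^ 2 + (y - w) ^ 2) := by
  simp [pt, EuclideanSpace.dist_eq, Fin.sum_univ_two, Real.dist_eq, sq_abs]

theorem dist_pt_zero_add_mul_tan (x y : ℝ) {α : ℝ} (hα : 0 < cos α) :
    dist (pt x y) (pt 0 (y + x * tan α)) = |x| / cos α := by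
  have hsq : (x - 0) ^ 2 + (y - (y + x * tan α)) ^ 2 = (x / cos α) ^ 2 := by
    rw [tan_eq_sin_div_cos]
    field_simp
    linear_combination x ^ 2 * sin_sq_add_cos_sq α
  rw [dist_pt, hsq, sqrt_sq_eq_abs, abs_div, abs_of_pos hα]

theorem dist_pt_zero_left (y w : ℝ) : dist (pt 0 y) (pt 0 w) = |y - w| := by
  rw [dist_pt, sub_self, zero_pow two_ne_zero, zero_add, sqrt_sq_eq_abs]

/-- The weighted length of the symmetric tree that joins the vertices `(±a/2, d)` and `(±b/2, 0)` of
an isosceles trapezium through the apexes of the isosceles triangles with base angle `α` standing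
inwards on its two parallel sides. The edge between the apexes has weight `2 sin α`, which balances
the two unit-weight edges meeting it at either end. -/
noncomputable def forkedTreeLength (a b d α : ℝ) : ℝ :=
  2 * dist (pt (-(a / 2)) d) (pt 0 (d - a / 2 * tan α)) +
    2 * dist (pt (b / 2) 0) (pt 0 (b / 2 * tan α)) +
    2 * sin α * dist (pt 0 (d - a / 2 * tan α)) (pt 0 (b / 2 * tan α))

theorem forkedTreeLength_eq {a b α : ℝ} (ha : 0 ≤ a) (hb : 0 ≤ b) (hα : 0 < cos α) (d : ℝ) :
    forkedTreeLength a b d α =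
      (a + b) * (cos α)⁻¹ + 2 * sin α * |d - (a + b) / 2 * tan α| := by
  have htop : dist (pt (-(a / 2)) d) (pt 0 (d - a / 2 * tan α)) = a / 2 / cos α := by
    rw [sub_eq_add_neg, ← neg_mul, dist_pt_zero_add_mul_tan _ _ hα, abs_neg,
      abs_of_nonneg (by positivity)]
  have hbottom : dist (pt (b / 2) 0) (pt 0 (b / 2 * tan α)) = b / 2 / cos α := by
    rw [← zero_add (b / 2 * tan α), dist_pt_zero_add_mul_tan _ _ hα,
      abs_of_nonneg (by positivity)]
  have hmiddle : d - a / 2 * tan α - b / 2 * tan α = d - (a + b) / 2 * tan α := by ring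
  rw [forkedTreeLength, htop, hbottom, dist_pt_zero_left, hmiddle]
  ring

theorem forkedTreeLength_pi_div_six (a b d : ℝ) :
    forkedTreeLength a b d (π / 6) =
      2 * dist (pt (-(a / 2)) d) (pt 0 (d - a / (2 * √3))) +
        2 * dist (pt (b / 2) 0) (pt 0 (b / (2 * √3))) +
        dist (pt 0 (d - a / (2 * √3))) (pt 0 (b / (2 * √3))) := by
  have hapex (x : ℝ) : x / 2 * tan (π / 6) = x / (2 * √3) := by
    rw [tan_pi_div_six, div_mul_div_comm, mul_one]
  have hweight : 2 * sin (π / 6) = 1 := by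
    rw [sin_pi_div_six, mul_one_div_cancel two_ne_zero]
  rw [forkedTreeLength, hapex, hapex, hweight, one_mul]

theorem sin_mul_tan_sub_tan_lt_inv_cos_sub_inv_cos {α β : ℝ} (hα : α ∈ Set.Ioo (-(π / 2)) (π / 2))
    (hβ : β ∈ Set.Ioo (-(π / 2)) (π / 2)) (hne : α ≠ β) :
    sin α * (tan β - tan α) < (cos β)⁻¹ - (cos α)⁻¹ := by
  have hcosα : 0 < cos α := cos_pos_of_mem_Ioo hα
  have hcosβ : 0 < cos β := cos_pos_of_mem_Ioo hβ
  have hcos_ne : cos (β - α) ≠ 1 := by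
    rw [Ne, cos_eq_one_iff_of_lt_of_lt (by linarith [hα.2, hβ.1, pi_pos])
      (by linarith [hα.1, hβ.2, pi_pos])]
    exact sub_ne_zero.mpr hne.symm
  have hgap : (cos β)⁻¹ - (cos α)⁻¹ - sin α * (tan β - tan α) = (1 - cos (β - α)) / cos β := by
    rw [cos_sub, tan_eq_sin_div_cos, tan_eq_sin_div_cos]
    field_simp
    linear_combination cos β * sin_sq_add_cos_sq α
  have hgap_pos : 0 < (1 - cos (β - α)) / cos β :=
    div_pos (sub_pos.mpr ((cos_le_one _).lt_of_ne hcos_ne)) hcosβ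
  linarith

theorem forkedTreeLength_strictMonoOn {a b : ℝ} (ha : 0 ≤ a) (hb : 0 ≤ b) (hab : 0 < a + b)
    (d : ℝ) : StrictMonoOn (forkedTreeLength a b d) (Set.Ico 0 (π / 2)) := by
  intro α hα β hβ hαβ
  have hα' : α ∈ Set.Ioo (-(π / 2)) (π / 2) := ⟨by linarith [hα.1, pi_pos], hα.2⟩
  have hβ' : β ∈ Set.Ioo (-(π / 2)) (π / 2) := ⟨by linarith [hβ.1, pi_pos], hβ.2⟩
  have hsin_nonneg : 0 ≤ sin α := sin_nonneg_of_nonneg_of_le_pi hα.1 (by linarith [hα.2, pi_pos])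
  have hsin : sin α ≤ sin β := sin_le_sin_of_le_of_le_pi_div_two hα'.1.le hβ.2.le hαβ.le
  have htan : tan α ≤ tan β := (tan_lt_tan_of_lt_of_lt_pi_div_two hα'.1 hβ.2 hαβ).le
  have habs : |d - (a + b) / 2 * tan α| ≤
      |d - (a + b) / 2 * tan β| + (a + b) / 2 * (tan β - tan α) := by
    have hstep : 0 ≤ (a + b) / 2 * (tan β - tan α) :=
      mul_nonneg (by positivity) (sub_nonneg.mpr htan)
    calc |d - (a + b) / 2 * tan α|
        = |(d - (a + b) / 2 * tan β) + (a + b) / 2 * (tan β - tan α)| := by ring_nf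
      _ ≤ |d - (a + b) / 2 * tan β| + |(a + b) / 2 * (tan β - tan α)| := abs_add_le _ _
      _ = |d - (a + b) / 2 * tan β| + (a + b) / 2 * (tan β - tan α) := by
        rw [abs_of_nonneg hstep]
  have hconvex : sin α * (tan β - tan α) < (cos β)⁻¹ - (cos α)⁻¹ :=
    sin_mul_tan_sub_tan_lt_inv_cos_sub_inv_cos hα' hβ' hαβ.ne
  rw [forkedTreeLength_eq ha hb (cos_pos_of_mem_Ioo hα'),
    forkedTreeLength_eq ha hb (cos_pos_of_mem_Ioo hβ')]
  calc (a + b) * (cos α)⁻¹ + 2 * sin α * |d - (a + b) / 2 * tan α|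
      ≤ (a + b) * (cos α)⁻¹ +
          2 * sin α * (|d - (a + b) / 2 * tan β| + (a + b) / 2 * (tan β - tan α)) := by gcongr
    _ = (a + b) * ((cos α)⁻¹ + sin α * (tan β - tan α)) +
          2 * sin α * |d - (a + b) / 2 * tan β| := by ring
    _ < (a + b) * (cos β)⁻¹ + 2 * sin α * |d - (a + b) / 2 * tan β| := by
      gcongr
      linarith
    _ ≤ (a + b) * (cos β)⁻¹ + 2 * sin β * |d - (a + b) / 2 * tan β| := by gcongr

theorem sin_add_pi_div_six_lt_sin_two_mul {φ : ℝ} (hφ : π / 6 < φ) (hφ' : φ < 5 * π / 18) :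
    sin (φ + π / 6) < sin (2 * φ) := by
  have hsin : 0 < sin ((2 * φ - (φ + π / 6)) / 2) :=
    sin_pos_of_pos_of_lt_pi (by linarith) (by linarith)
  have hcos : 0 < cos ((2 * φ + (φ + π / 6)) / 2) :=
    cos_pos_of_mem_Ioo ⟨by linarith, by linarith⟩
  rw [← sub_pos, sin_sub_sin]
  positivity

theorem sqrt_three_div_two_add_lt_two_mul_cos {φ : ℝ} (hφ : π / 6 < φ) (hφ' : φ < 5 * π / 18) :
    √3 / 2 + cos φ / (2 * sin φ) < 2 * cos φ := by
  have hsin : 0 < sin φ := sin_pos_of_pos_of_lt_pi (by linarith [pi_pos]) (by linarith [pi_pos])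
  calc √3 / 2 + cos φ / (2 * sin φ) = sin (φ + π / 6) / sin φ := by
        rw [sin_add, cos_pi_div_six, sin_pi_div_six]
        field_simp
    _ < sin (2 * φ) / sin φ := by
        gcongr
        exact sin_add_pi_div_six_lt_sin_two_mul hφ hφ'
    _ = 2 * cos φ := by
        rw [sin_two_mul]
        field_simp

theorem stmt_12_general (a12 a34 d θ : ℝ) (ha12 : 0 < a12) (ha34 : 0 < a34)
    (hθ : θ = 2 * Real.arctan ((a12 + a34) / (2 * d))) (hθ' : π / 3 < θ)
    (A₁' A₃ F₁₂ F₃₄ O₁₂ O₃₄ : EuclideanSpace ℝ (Fin 2))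
    (hA₁ : A₁' = pt (-(a12 / 2)) d) (hA₃ : A₃ = pt (a34 / 2) 0)
    (hF₁₂ : F₁₂ = pt 0 (d - a12 / 2 * Real.tan (θ / 2)))
    (hF₃₄ : F₃₄ = pt 0 (a34 / 2 * Real.tan (θ / 2)))
    (hO₁₂ : O₁₂ = pt 0 (d - a12 / (2 * Real.sqrt 3)))
    (hO₃₄ : O₃₄ = pt 0 (a34 / (2 * Real.sqrt 3))) :
    2 * dist A₁' F₁₂ + 2 * dist A₃ F₃₄ + 2 * Real.sin (θ / 2) * dist F₁₂ F₃₄ >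
      2 * dist A₁' O₁₂ + 2 * dist A₃ O₃₄ + dist O₁₂ O₃₄ ∧
    (θ < 5 * π / 9 → 2 * (a12 + a34) * Real.cos (θ / 2) >
      (a12 + a34) * (Real.sqrt 3 / 2 + Real.cos (θ / 2) / (2 * Real.sin (θ / 2)))) := by
  have hsum : 0 < a12 + a34 := add_pos ha12 ha34
  have hhalf : π / 6 < θ / 2 := by linarith
  have hhalf_lt : θ / 2 < π / 2 := by
    linarith [arctan_lt_pi_div_two ((a12 + a34) / (2 * d))]
  constructor
  · have hlength : forkedTreeLength a12 a34 d (π / 6) < forkedTreeLength a12 a34 d (θ / 2) :=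
      forkedTreeLength_strictMonoOn ha12.le ha34.le hsum d
        ⟨by positivity, by linarith⟩ ⟨by linarith [pi_pos], hhalf_lt⟩ hhalf
    rw [forkedTreeLength_pi_div_six] at hlength
    subst hA₁ hA₃ hF₁₂ hF₃₄ hO₁₂ hO₃₄
    exact hlength
  · intro hθ_lt
    rw [gt_iff_lt, mul_comm 2 (a12 + a34), mul_assoc]
    exact mul_lt_mul_of_pos_left
      (sqrt_three_div_two_add_lt_two_mul_cos hhalf (by linarith)) hsum

theorem stmt_12 (a12 a34 d θ : ℝ) (ha12 : 0 < a12) (ha34 : 0 < a34)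
    (hd : max a12 a34 < d)
    (hθ : θ = 2 * Real.arctan ((a12 + a34) / (2 * d)))
    (hθ' : π / 3 < θ ∧ θ < π / 2)
    (A₁' A₂' A₃ A₄ F₁₂ F₃₄ O₁₂ O₃₄ : EuclideanSpace ℝ (Fin 2))
    (hA₁ : A₁' = pt (-(a12 / 2)) d) (hA₂ : A₂' = pt (a12 / 2) d)
    (hA₃ : A₃ = pt (a34 / 2) 0) (hA₄ : A₄ = pt (-(a34 / 2)) 0)
    (hF₁₂ : F₁₂ = pt 0 (d - a12 / 2 * Real.tan (θ / 2)))
    (hF₃₄ : F₃₄ = pt 0 (a34 / 2 * Real.tan (θ / 2)))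
    (hO₁₂ : O₁₂ = pt 0 (d - a12 / (2 * Real.sqrt 3)))
    (hO₃₄ : O₃₄ = pt 0 (a34 / (2 * Real.sqrt 3))) :
    2 * dist A₁' F₁₂ + 2 * dist A₃ F₃₄ + 2 * Real.sin (θ / 2) * dist F₁₂ F₃₄ >
      2 * dist A₁' O₁₂ + 2 * dist A₃ O₃₄ + dist O₁₂ O₃₄ ∧
    2 * (a12 + a34) * Real.cos (θ / 2) >
      (a12 + a34) * (Real.sqrt 3 / 2 + Real.cos (θ / 2) / (2 * Real.sin (θ / 2))) := by
  have h := stmt_12_general a12 a34 d θ ha12 ha34 hθ hθ'.1 A₁' A₃ F₁₂ F₃₄ O₁₂ O₃₄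
    hA₁ hA₃ hF₁₂ hF₃₄ hO₁₂ hO₃₄
  exact ⟨h.1, h.2 (by linarith [hθ'.2, pi_pos])⟩
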